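/- arXiv:2409.19997 — 2 statements merged into one kernel-verified Lean document; each statement's English description precedes it below -/
import Mathlib

section
/- Let f be C³, symmetric about L/2, f' > 0 on [0,L/2), f'' ≤ 0, f''(L/2) < 0. Uniformly in a ∈ [−1,1], Iₙ(L/2 + a/√n) ~ (f^{n−1}(L/2)/√n) · ∫_{−∞}^a exp(f''(L/2) h²/(2 f(L/2))) dh as n → ∞. -/
open MeasureTheory Filter Set Asymptotics Topology intervalIntegral Real

noncomputable section

/-!
Laplace's method. Put `s = c + h / √n`, where `c` is the point at which `|f|` has its strict
maximum. The second-order expansion of `f` at `c` makes `(f s / f c) ^ (n - 1)` converge pointwise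
to a Gaussian in `h`. Compactness upgrades this expansion to a global bound
`|f s| ≤ f c - δ * (s - c) ^ 2`, which dominates the rescaled powers by another Gaussian. The
convergence therefore holds in `L¹(ℝ)`, so the integrals over `Iic a` converge uniformly in `a`;
the error is uniform also in the relative sense for `a ≥ α`, since the limit is then at least its
value at `α`.
-/

section SecondOrderExpansion

variable {f : ℝ → ℝ} {c : ℝ}

theorem tendsto_sub_div_sq_of_deriv_eq_zero (hf : ContinuousAt f c) (hcrit : deriv f c = 0)
    (hsec : deriv (deriv f) c ≠ 0) :
    Tendsto (fun s => (f s - f c) / (s - c) ^ 2) (𝓝[≠] c) (𝓝 (deriv (deriv f) c / 2)) := by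
  have hderiv : HasDerivAt (deriv f) (deriv (deriv f) c) c :=
    (differentiableAt_of_deriv_ne_zero hsec).hasDerivAt
  have hslope : Tendsto (fun s => deriv f s / (2 * (s - c))) (𝓝[≠] c)
      (𝓝 (deriv (deriv f) c / 2)) := by
    refine ((hasDerivAt_iff_tendsto_slope.1 hderiv).div_const 2).congr fun s => ?_
    rw [slope_def_field, hcrit, sub_zero, div_div, mul_comm]
  have hnum : Tendsto (fun s => f s - f c) (𝓝[≠] c) (𝓝 0) :=
    tendsto_sub_nhds_zero_iff.2 (hf.mono_left nhdsWithin_le_nhds)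
  have hden : Tendsto (fun s => (s - c) ^ 2) (𝓝[≠] c) (𝓝 0) :=
    ((by fun_prop : Continuous fun s : ℝ => (s - c) ^ 2).tendsto' c 0 (by simp)).mono_left
      nhdsWithin_le_nhds
  refine HasDerivAt.lhopital_zero_nhdsNE ?_ ?_ ?_ hnum hden hslope
  · -- Near `c` the derivative is nonzero, hence not a junk value, so `f` is differentiable there.
    filter_upwards [hderiv.eventually_ne (c := 0) hsec] with s hs
    exact (differentiableAt_of_deriv_ne_zero hs).hasDerivAt.sub_const _
  · exact Eventually.of_forall fun s => by simpa using ((hasDerivAt_id' s).sub_const c).fun_pow 2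
  · filter_upwards [self_mem_nhdsWithin] with s hs
    exact mul_ne_zero two_ne_zero (sub_ne_zero.2 hs)

theorem exists_pos_forall_le_sub_mul_sq {B : ℝ} {K : Set ℝ} (hK : IsCompact K)
    (hf : ContinuousOn f K) (hB : B < 0)
    (hlim : Tendsto (fun s => (f s - f c) / (s - c) ^ 2) (𝓝[≠] c) (𝓝 B))
    (hmax : ∀ s ∈ K, s ≠ c → f s < f c) :
    ∃ δ > 0, ∀ s ∈ K, f s ≤ f c - δ * (s - c) ^ 2 := by
  obtain ⟨U, hU, hcU, hnear⟩ : ∃ U, IsOpen U ∧ c ∈ U ∧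
      ∀ s ∈ U ∩ {c}ᶜ, (f s - f c) / (s - c) ^ 2 < B / 2 :=
    mem_nhdsWithin.1 (hlim.eventually_lt_const (by linarith))
  obtain ⟨δ, hδ, hfar⟩ : ∃ δ > 0, ∀ s ∈ K \ U, δ ≤ (f c - f s) / (s - c) ^ 2 := by
    have hne : ∀ s ∈ K \ U, s ≠ c := fun s hs hsc => hs.2 (hsc ▸ hcU)
    refine (hK.diff hU).exists_forall_le' (.div (continuousOn_const.sub (hf.mono sdiff_subset))
      (by fun_prop) fun s hs => pow_ne_zero 2 (sub_ne_zero.2 (hne s hs))) fun s hs => ?_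
    have hsc : s ≠ c := hne s hs
    exact div_pos (sub_pos.2 (hmax s hs.1 hsc)) (sq_pos_of_ne_zero (sub_ne_zero.2 hsc))
  refine ⟨min δ (-(B / 2)), lt_min hδ (by linarith), fun s hs => ?_⟩
  rcases eq_or_ne s c with rfl | hsc
  · simp
  have hsq : 0 < (s - c) ^ 2 := sq_pos_of_ne_zero (sub_ne_zero.2 hsc)
  suffices min δ (-(B / 2)) ≤ (f c - f s) / (s - c) ^ 2 by
    linarith [(le_div_iff₀ hsq).1 this]
  by_cases hsU : s ∈ U
  · have := hnear s ⟨hsU, hsc⟩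
    rw [← neg_sub, neg_div] at this
    exact (min_le_right _ _).trans (by linarith)
  · exact (min_le_left _ _).trans (hfar s ⟨hs, hsU⟩)

theorem tendsto_abs_sub_div_sq {B : ℝ} (hf : ContinuousAt f c) (hfc : 0 < f c)
    (hlim : Tendsto (fun s => (f s - f c) / (s - c) ^ 2) (𝓝[≠] c) (𝓝 B)) :
    Tendsto (fun s => (|f s| - |f c|) / (s - c) ^ 2) (𝓝[≠] c) (𝓝 B) := by
  refine hlim.congr' ?_
  filter_upwards [nhdsWithin_le_nhds (hf.eventually_const_lt hfc)] with s hs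
  rw [abs_of_pos hs, abs_of_pos hfc]

end SecondOrderExpansion

section PowersNearOne

theorem tendsto_pow_pred_exp {r : ℕ → ℝ} {t : ℝ}
    (hr : Tendsto (fun n : ℕ => n * (r n - 1)) atTop (𝓝 t)) :
    Tendsto (fun n => r n ^ (n - 1)) atTop (𝓝 (exp t)) := by
  have hr_one : Tendsto r atTop (𝓝 1) :=
    by
    simpa using (ProbabilityTheory.tendsto_zero_of_tendsto_mul_atTop hr).add_const 1
  have hpow : Tendsto (fun n => r n ^ n) atTop (𝓝 (exp t)) := by
    simpa only [add_sub_cancel] using tendsto_one_add_pow_exp_of_tendsto hr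
  have hdiv := hpow.div hr_one one_ne_zero
  rw [div_one] at hdiv
  refine hdiv.congr' ?_
  filter_upwards [eventually_gt_atTop 0, hr_one.eventually_ne one_ne_zero] with n hn hne
  rw [Pi.div_apply, div_eq_iff hne, pow_sub_one_mul hn.ne']

theorem pow_pred_le_exp_neg_half {x t : ℝ} {n : ℕ} (hn : 2 ≤ n) (hx : 0 ≤ x) (ht : 0 ≤ t)
    (hxt : x ≤ 1 - t / n) : x ^ (n - 1) ≤ exp (-(t / 2)) := by
  have hn' : (2 : ℝ) ≤ n := by exact_mod_cast hn
  have hhalf : 1 / 2 ≤ ((n : ℝ) - 1) / n := by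
    rw [div_le_div_iff₀ two_pos (by positivity)]
    linarith
  calc x ^ (n - 1) ≤ exp (-(t / n)) ^ (n - 1) :=
        pow_le_pow_left₀ hx (hxt.trans (one_sub_le_exp_neg _)) _
    _ = exp (-(t * ((n - 1) / n))) := by
        rw [← exp_nat_mul, Nat.cast_sub (by lia), Nat.cast_one]
        ring_nf
    _ ≤ exp (-(t / 2)) := by
        rw [exp_le_exp, neg_le_neg_iff, div_eq_mul_one_div]
        exact mul_le_mul_of_nonneg_left hhalf ht

end PowersNearOne

section UniformPrimitives

variable {ι : Type*} {l : Filter ι} {F : ι → ℝ → ℝ} {g : ℝ → ℝ}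

theorem eventually_forall_abs_setIntegral_Iic_sub_le {α ε : ℝ} (hg : Integrable g) (hg0 : 0 ≤ g)
    (hα : 0 < ∫ h in Iic α, g h) (hF : ∀ᶠ n in l, Integrable (F n))
    (hlim : Tendsto (fun n => ∫ h, |F n h - g h|) l (𝓝 0)) (hε : 0 < ε) :
    ∀ᶠ n in l, ∀ a ≥ α,
      |(∫ h in Iic a, F n h) - ∫ h in Iic a, g h| ≤ ε * ∫ h in Iic a, g h := by
  filter_upwards [hF, hlim.eventually_le_const (mul_pos hε hα)] with n hFn hsmall a ha
  rw [← integral_sub hFn.integrableOn hg.integrableOn]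
  calc |∫ h in Iic a, (F n h - g h)|
    _ ≤ ∫ h in Iic a, |F n h - g h| := MeasureTheory.abs_integral_le_integral_abs
    _ ≤ ∫ h, |F n h - g h| :=
        setIntegral_le_integral (hFn.sub hg).abs (Eventually.of_forall fun _ => abs_nonneg _)
    _ ≤ ε * ∫ h in Iic α, g h := hsmall
    _ ≤ ε * ∫ h in Iic a, g h := mul_le_mul_of_nonneg_left (setIntegral_mono_set hg.integrableOn
        (Eventually.of_forall hg0) (Iic_subset_Iic.2 ha).eventuallyLE) hε.le

end UniformPrimitives

section DominatedConvergence

variable {X E ι : Type*} [MeasurableSpace X] {μ : Measure X} [NormedAddCommGroup E]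
  {l : Filter ι} [l.IsCountablyGenerated] {F : ι → X → E} {g : X → E}

theorem tendsto_integral_norm_sub_of_dominated {bound : X → ℝ}
    (hF : ∀ᶠ n in l, AEStronglyMeasurable (F n) μ) (hg : Integrable g μ)
    (hbound : Integrable bound μ) (hle : ∀ᶠ n in l, ∀ᵐ x ∂μ, ‖F n x‖ ≤ bound x)
    (hlim : ∀ᵐ x ∂μ, Tendsto (fun n => F n x) l (𝓝 (g x))) :
    Tendsto (fun n => ∫ x, ‖F n x - g x‖ ∂μ) l (𝓝 0) := by
  rw [← integral_zero X ℝ (μ := μ)]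
  refine tendsto_integral_filter_of_dominated_convergence (fun x => bound x + ‖g x‖) ?_ ?_
    (hbound.add hg.norm) ?_
  · filter_upwards [hF] with n hFn using (hFn.sub hg.aestronglyMeasurable).norm
  · filter_upwards [hle] with n hn
    filter_upwards [hn] with x hx
    rw [norm_norm]
    exact (norm_sub_le _ _).trans (add_le_add_left hx _)
  · filter_upwards [hlim] with x hx using tendsto_iff_norm_sub_tendsto_zero.1 hx

end DominatedConvergence

section RescaledPow

/-- The integrand of `∫ s in p..d, f s ^ (n - 1)` in the variable `h` with `s = c + h / √n`, divided
by its value at `s = c` and extended by zero to all of `ℝ`. -/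
def rescaledPow (f : ℝ → ℝ) (p c d : ℝ) (n : ℕ) : ℝ → ℝ :=
  (Ioc ((p - c) * √n) ((d - c) * √n)).indicator fun h => (f (c + h / √n) / f c) ^ (n - 1)

variable {f : ℝ → ℝ} {p c d : ℝ} {n : ℕ}

theorem mem_Ioc_mul_sqrt_iff (hn : 0 < n) {h : ℝ} :
    h ∈ Ioc ((p - c) * √n) ((d - c) * √n) ↔ c + h / √n ∈ Ioc p d := by
  have hsqrt : 0 < √(n : ℝ) := by positivity
  rw [mem_Ioc, mem_Ioc, ← lt_div_iff₀ hsqrt, ← div_le_iff₀ hsqrt, sub_lt_iff_lt_add',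
    le_sub_iff_add_le']

theorem eventually_add_div_sqrt_mem {U : Set ℝ} (hU : U ∈ 𝓝 c) (h : ℝ) :
    ∀ᶠ n : ℕ in atTop, c + h / √n ∈ U := by
  have hlim : Tendsto (fun n : ℕ => c + h / √n) atTop (𝓝 (c + 0)) :=
    ((tendsto_sqrt_atTop.comp tendsto_natCast_atTop_atTop).const_div_atTop h).const_add c
  rw [add_zero] at hlim
  exact hlim hU

theorem aestronglyMeasurable_rescaledPow (hn : 0 < n) (hf : ContinuousOn f (Icc p d)) :
    AEStronglyMeasurable (rescaledPow f p c d n) := by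
  refine (aestronglyMeasurable_indicator_iff measurableSet_Ioc).2
    (ContinuousOn.aestronglyMeasurable ?_ measurableSet_Ioc)
  exact ((hf.comp (by fun_prop) fun h hh =>
    Ioc_subset_Icc_self ((mem_Ioc_mul_sqrt_iff hn).1 hh)).div_const _).pow _

theorem norm_rescaledPow_le_exp {δ : ℝ} (hn : 2 ≤ n) (hfc : 0 < f c) (hδ : 0 ≤ δ)
    (hquad : ∀ s ∈ Icc p d, |f s| ≤ f c - δ * (s - c) ^ 2) (h : ℝ) :
    ‖rescaledPow f p c d n h‖ ≤ exp (-(δ / (2 * f c)) * h ^ 2) := by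
  rw [rescaledPow, norm_indicator_eq_indicator_norm]
  refine indicator_apply_le' (fun hh => ?_) fun _ => (exp_pos _).le
  have hs : |f (c + h / √n)| ≤ f c - δ * (h ^ 2 / n) := by
    have := hquad _ (Ioc_subset_Icc_self ((mem_Ioc_mul_sqrt_iff (by lia)).1 hh))
    rwa [add_sub_cancel_left, div_pow, sq_sqrt n.cast_nonneg] at this
  rw [norm_pow, norm_div, norm_of_nonneg hfc.le, norm_eq_abs,
    show -(δ / (2 * f c)) * h ^ 2 = -(δ * h ^ 2 / f c / 2) by field_simp]
  refine pow_pred_le_exp_neg_half hn (by positivity) (by positivity) ?_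
  rw [div_le_iff₀ hfc]
  refine hs.trans_eq ?_
  field_simp

theorem tendsto_rescaledPow {A : ℝ} (hpc : p < c) (hcd : c < d) (hfc : f c ≠ 0)
    (hlim : Tendsto (fun s => (f s - f c) / (s - c) ^ 2) (𝓝[≠] c) (𝓝 (A / 2))) (h : ℝ) :
    Tendsto (fun n => rescaledPow f p c d n h) atTop (𝓝 (exp (A * h ^ 2 / (2 * f c)))) := by
  have hpow : Tendsto (fun n : ℕ => n * (f (c + h / √n) / f c - 1)) atTop
      (𝓝 (A * h ^ 2 / (2 * f c))) := by
    rcases eq_or_ne h 0 with rfl | hh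
    · simp [hfc]
    have hs : Tendsto (fun n : ℕ => c + h / √n) atTop (𝓝[≠] c) := by
      refine tendsto_nhdsWithin_iff.2 ⟨fun U hU => eventually_add_div_sqrt_mem hU h, ?_⟩
      filter_upwards [eventually_gt_atTop 0] with n hn
      simpa [hn.ne'] using hh
    rw [show A * h ^ 2 / (2 * f c) = A / 2 * (h ^ 2 / f c) by field_simp]
    refine ((hlim.comp hs).mul_const (h ^ 2 / f c)).congr' ?_
    filter_upwards [eventually_gt_atTop 0] with n hn
    have hn' : (n : ℝ) ≠ 0 := by positivity
    simp only [Function.comp_apply, add_sub_cancel_left, div_pow, sq_sqrt n.cast_nonneg]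
    field_simp
  refine (tendsto_pow_pred_exp hpow).congr' ?_
  filter_upwards [eventually_gt_atTop 0, eventually_add_div_sqrt_mem (Ioc_mem_nhds hpc hcd) h]
    with n hn hmem
  rw [rescaledPow, indicator_of_mem ((mem_Ioc_mul_sqrt_iff hn).2 hmem)]

theorem integral_pow_eq_setIntegral_rescaledPow (hn : 0 < n) (hfc : f c ≠ 0) {a : ℝ}
    (hpa : p ≤ c + a / √n) (had : c + a / √n ≤ d) :
    ∫ s in p..c + a / √n, f s ^ (n - 1) =
      f c ^ (n - 1) / √n * ∫ h in Iic a, rescaledPow f p c d n h := by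
  have hsqrt : 0 < √(n : ℝ) := by positivity
  have hleft : (p - c) * √n ≤ a := by rw [← le_div_iff₀ hsqrt]; linarith
  have hright : a ≤ (d - c) * √n := by rw [← div_le_iff₀ hsqrt]; linarith
  have hinter : Iic a ∩ Ioc ((p - c) * √n) ((d - c) * √n) = Ioc ((p - c) * √n) a := by
    rw [inter_comm, Ioc_inter_Iic, inf_eq_right.2 hright]
  have hsubst : ∫ h in (p - c) * √n..a, f (c + h / √n) ^ (n - 1) =
      √n * ∫ s in p..c + a / √n, f s ^ (n - 1) := by
    rw [intervalIntegral.integral_comp_add_div (fun s => f s ^ (n - 1)) hsqrt.ne',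
      mul_div_cancel_right₀ _ hsqrt.ne', add_sub_cancel, smul_eq_mul]
  simp only [rescaledPow]
  rw [setIntegral_indicator measurableSet_Ioc, hinter, ← intervalIntegral.integral_of_le hleft]
  simp_rw [div_pow]
  rw [intervalIntegral.integral_div, hsubst]
  field_simp

end RescaledPow

section Laplace

variable {f : ℝ → ℝ} {p c d : ℝ}

theorem integrable_exp_mul_sq_div {A M : ℝ} (hA : A < 0) (hM : 0 < M) :
    Integrable fun h : ℝ => exp (A * h ^ 2 / (2 * M)) := by
  convert integrable_exp_neg_mul_sq (b := -A / (2 * M)) (div_pos (neg_pos.2 hA) (by positivity))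
    using 3
  ring

theorem apply_pos_of_abs_lt (hpc : p < c) (hcd : c < d)
    (hmax : ∀ s ∈ Icc p d, s ≠ c → |f s| < f c) : 0 < f c :=
  (abs_nonneg _).trans_lt (hmax p (left_mem_Icc.2 (hpc.trans hcd).le) hpc.ne)

theorem tendsto_sub_div_sq_of_abs_lt (hpc : p < c) (hcd : c < d) (hf : ContinuousAt f c)
    (hmax : ∀ s ∈ Icc p d, s ≠ c → |f s| < f c) (hsec : deriv (deriv f) c ≠ 0) :
    Tendsto (fun s => (f s - f c) / (s - c) ^ 2) (𝓝[≠] c) (𝓝 (deriv (deriv f) c / 2)) := by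
  have hlocal : IsLocalMax f c := by
    filter_upwards [Icc_mem_nhds hpc hcd] with s hs
    rcases eq_or_ne s c with rfl | hsc
    exacts [le_rfl, (le_abs_self _).trans (hmax s hs hsc).le]
  exact tendsto_sub_div_sq_of_deriv_eq_zero hf hlocal.deriv_eq_zero hsec

theorem exists_norm_rescaledPow_le_exp (hpc : p < c) (hcd : c < d)
    (hf : ContinuousOn f (Icc p d)) (hmax : ∀ s ∈ Icc p d, s ≠ c → |f s| < f c)
    (hsec : deriv (deriv f) c < 0) :
    ∃ b > 0, ∀ n ≥ 2, ∀ h, ‖rescaledPow f p c d n h‖ ≤ exp (-b * h ^ 2) := by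
  have hfc := apply_pos_of_abs_lt hpc hcd hmax
  have hcont : ContinuousAt f c := hf.continuousAt (Icc_mem_nhds hpc hcd)
  have hlim := tendsto_abs_sub_div_sq hcont hfc
    (tendsto_sub_div_sq_of_abs_lt hpc hcd hcont hmax hsec.ne)
  obtain ⟨δ, hδ, hquad⟩ := exists_pos_forall_le_sub_mul_sq isCompact_Icc hf.abs
    (by linarith) hlim (by simpa only [abs_of_pos hfc] using hmax)
  rw [abs_of_pos hfc] at hquad
  exact ⟨δ / (2 * f c), by positivity, fun n hn => norm_rescaledPow_le_exp hn hfc hδ.le hquad⟩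

theorem eventually_integrable_rescaledPow (hpc : p < c) (hcd : c < d)
    (hf : ContinuousOn f (Icc p d)) (hmax : ∀ s ∈ Icc p d, s ≠ c → |f s| < f c)
    (hsec : deriv (deriv f) c < 0) :
    ∀ᶠ n in atTop, Integrable (rescaledPow f p c d n) := by
  obtain ⟨b, hb, hle⟩ := exists_norm_rescaledPow_le_exp hpc hcd hf hmax hsec
  filter_upwards [eventually_ge_atTop 2] with n hn
  exact (integrable_exp_neg_mul_sq hb).mono' (aestronglyMeasurable_rescaledPow (by lia) hf)
    (Eventually.of_forall (hle n hn))

theorem tendsto_integral_norm_rescaledPow_sub_exp (hpc : p < c) (hcd : c < d)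
    (hf : ContinuousOn f (Icc p d)) (hmax : ∀ s ∈ Icc p d, s ≠ c → |f s| < f c)
    (hsec : deriv (deriv f) c < 0) :
    Tendsto (fun n => ∫ h, ‖rescaledPow f p c d n h
      - exp (deriv (deriv f) c * h ^ 2 / (2 * f c))‖) atTop (𝓝 0) := by
  have hfc := apply_pos_of_abs_lt hpc hcd hmax
  have hlim := tendsto_sub_div_sq_of_abs_lt hpc hcd (hf.continuousAt (Icc_mem_nhds hpc hcd)) hmax
    hsec.ne
  obtain ⟨b, hb, hle⟩ := exists_norm_rescaledPow_le_exp hpc hcd hf hmax hsec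
  refine tendsto_integral_norm_sub_of_dominated ?_ (integrable_exp_mul_sq_div hsec hfc)
    (integrable_exp_neg_mul_sq hb) ?_
    (Eventually.of_forall (tendsto_rescaledPow hpc hcd hfc.ne' hlim))
  · filter_upwards [eventually_gt_atTop 0] with n hn using aestronglyMeasurable_rescaledPow hn hf
  · filter_upwards [eventually_ge_atTop 2] with n hn using Eventually.of_forall (hle n hn)

theorem In_uniform_asymptotic_general {α ε : ℝ} {β : ℕ → ℝ} (hpc : p < c) (hcd : c < d)
    (hf : ContinuousOn f (Icc p d)) (hmax : ∀ s ∈ Icc p d, s ≠ c → |f s| < f c)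
    (hsec : deriv (deriv f) c < 0) (hβ : ∀ᶠ n in atTop, c + β n / √n ≤ d) (hε : 0 < ε) :
    ∀ᶠ n : ℕ in atTop, ∀ a ∈ Icc α (β n),
      |(∫ s in p..c + a / √n, f s ^ (n - 1))
          - f c ^ (n - 1) / √n * ∫ h in Iic a, exp (deriv (deriv f) c * h ^ 2 / (2 * f c))|
        ≤ ε * (f c ^ (n - 1) / √n *
          ∫ h in Iic a, exp (deriv (deriv f) c * h ^ 2 / (2 * f c))) := by
  have hfc := apply_pos_of_abs_lt hpc hcd hmax
  have hgauss := integrable_exp_mul_sq_div hsec hfc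
  have hα : 0 < ∫ h in Iic α, exp (deriv (deriv f) c * h ^ 2 / (2 * f c)) :=
    have : NeZero (volume.restrict (Iic α)) := ⟨by simp⟩
    integral_exp_pos hgauss.integrableOn
  have hL1 := eventually_forall_abs_setIntegral_Iic_sub_le hgauss (fun h => (exp_pos _).le) hα
    (eventually_integrable_rescaledPow hpc hcd hf hmax hsec)
    (tendsto_integral_norm_rescaledPow_sub_exp hpc hcd hf hmax hsec) hε
  filter_upwards [hL1, eventually_gt_atTop 0, hβ, eventually_add_div_sqrt_mem (Ici_mem_nhds hpc) α]
    with n hclose hn hβn (hαn : p ≤ c + α / √n) a ⟨hαa, haβ⟩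
  have hpa : p ≤ c + a / √n := hαn.trans (by gcongr)
  have had : c + a / √n ≤ d := le_trans (by gcongr) hβn
  rw [integral_pow_eq_setIntegral_rescaledPow hn hfc.ne' hpa had, ← mul_sub, abs_mul,
    abs_of_nonneg (by positivity), mul_left_comm]
  exact mul_le_mul_of_nonneg_left (hclose a hαa) (by positivity)

end Laplace

theorem abs_lt_apply_half_of_symm_of_deriv_pos {f : ℝ → ℝ} {L : ℝ}
    (hf : ContinuousOn f (Icc 0 L)) (hnonneg : ∀ s ∈ Ioo 0 L, 0 ≤ f s)
    (hsym : ∀ s, f (L - s) = f s) (hf' : ∀ s ∈ Ioo 0 (L / 2), 0 < deriv f s) :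
    ∀ s ∈ Icc 0 L, s ≠ L / 2 → |f s| < f (L / 2) := by
  intro s hs hne
  have hL : 0 < L := by grind
  have hmono : StrictMonoOn f (Icc 0 (L / 2)) :=
    strictMonoOn_of_deriv_pos (convex_Icc _ _) (hf.mono (Icc_subset_Icc_right (by linarith)))
      (by rwa [interior_Icc])
  rw [← closure_Ioo hL.ne] at hf
  rw [abs_of_nonneg (le_on_closure hnonneg continuousOn_const hf (by rwa [closure_Ioo hL.ne]))]
  rcases hne.lt_or_gt with hlt | hgt
  · exact hmono ⟨hs.1, hlt.le⟩ ⟨by linarith, le_rfl⟩ hlt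
  · rw [← hsym s]
    exact hmono ⟨by linarith [hs.2], by linarith⟩ ⟨by linarith, le_rfl⟩ (by linarith)

/-- Uniformly in `a ∈ [-1,1]`,
`Iₙ(L/2 + a/√n) ~ (f^{n-1}(L/2)/√n) ∫_{-∞}^a exp(f''(L/2) h²/(2 f(L/2))) dh`. -/
theorem In_uniform_asymptotic
    (L : ℝ) (hL : 0 < L) (f : ℝ → ℝ)
    (hf : ContDiff ℝ 3 f)
    (hpos : ∀ s ∈ Set.Ioo 0 L, 0 < f s)
    (hasymp : Asymptotics.IsEquivalent (𝓝[>] (0:ℝ)) f id)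
    (hsym : ∀ s, f (L - s) = f s)
    (hf' : ∀ s ∈ Set.Ico 0 (L / 2), 0 < deriv f s)
    (hf'' : ∀ s ∈ Set.Icc 0 L, s ≠ L / 2 → deriv (deriv f) s ≤ 0)
    (hsec : deriv (deriv f) (L / 2) < 0)
    (I : ℕ → ℝ → ℝ)
    (hI : ∀ n r, I n r = ∫ s in (0:ℝ)..r, f s ^ (n - 1)) :
    ∀ ε : ℝ, 0 < ε → ∀ᶠ n : ℕ in atTop, ∀ a ∈ Set.Icc (-1:ℝ) 1,
      |I n (L / 2 + a / Real.sqrt n)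
          - f (L / 2) ^ (n - 1) / Real.sqrt n *
              ∫ h in Set.Iic a, Real.exp (deriv (deriv f) (L / 2) * h ^ 2 / (2 * f (L / 2)))|
        ≤ ε * (f (L / 2) ^ (n - 1) / Real.sqrt n *
              ∫ h in Set.Iic a, Real.exp (deriv (deriv f) (L / 2) * h ^ 2 / (2 * f (L / 2)))) := by
  intro ε hε
  simpa only [hI] using In_uniform_asymptotic_general (half_pos hL) (half_lt_self hL)
    hf.continuous.continuousOn (abs_lt_apply_half_of_symm_of_deriv_pos hf.continuous.continuousOn
      (fun s hs => (hpos s hs).le) hsym fun s hs => hf' s ⟨hs.1.le, hs.2⟩) hsec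
    (eventually_add_div_sqrt_mem (Iic_mem_nhds (half_lt_self hL)) 1) hε
end
end

section
/- Let f be C³ on [0,L], a weight function satisfying f(L−s)=f(s), f'>0 on [0,L/2), f''≤0, and f''(L/2)<0. Let τₙ be the hitting time of L by the diffusion with generator ∂² + bₙ ∂ started at 0, bₙ = (ln(Iₙ²/f^{n−1}))'. Then E[τₙ] = (f(L/2)/|f''(L/2)|)·(ln n)/n + O(√(ln n)/n) as n → ∞. -/
open MeasureTheory Filter Set Asymptotics Topology intervalIntegral Real

noncomputable section

/-!
Write `k = n - 1`, `w = f ^ k`, `c = L / 2` and `φ = f / f'`. Since `(φ f ^ k)' = (φ' + k) f ^ k`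
and `φ` has a simple pole at the nondegenerate maximum `c`, integrating gives
`k ∫₀ˢ w = φ(s) w(s)` up to a relative error `O(1 / (k (c - s)²))`. Hence, as long as `c - s` is at
least a cutoff `δ` of order `k ^ (-1/2)`, the integrand of `E[τₙ]` is `b / (k (c - s))` with
`b = f(c) / |f''(c)|`, up to errors whose integral is `O(1 / k)`; within `δ` of `c` monotonicity of
`f` bounds it by `O(δ)`, which contributes `O(δ²) = O(1 / k)`. The pole integrates to
`(b / k) log (c / δ) = (b / 2) (log k) / k + O(1 / k)`, and symmetry doubles it. The error is thus
even `O(1 / n)`.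
-/

section CriticalPoint

variable {f g h : ℝ → ℝ} {a c : ℝ}

lemma exists_abs_sub_le_mul_sub (hac : a ≤ c) (hg : ContDiff ℝ 1 g) :
    ∃ K, 0 ≤ K ∧ ∀ s ∈ Icc a c, |g s - g c| ≤ K * (c - s) := by
  obtain ⟨K, hK⟩ := hg.contDiffOn.exists_lipschitzOnWith one_ne_zero (convex_Icc a c) isCompact_Icc
  refine ⟨K, K.coe_nonneg, fun s hs => ?_⟩
  have hdist := hK.dist_le_mul s hs c (right_mem_Icc.2 hac)
  rwa [Real.dist_eq, Real.dist_eq, abs_sub_comm s c, abs_of_nonneg (sub_nonneg.2 hs.2)] at hdist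

lemma exists_abs_sub_deriv_mul_sub_le (hac : a ≤ c) (hg : ContDiff ℝ 2 g) :
    ∃ K, 0 ≤ K ∧ ∀ s ∈ Icc a c, |g s - g c - deriv g c * (s - c)| ≤ K * (c - s) ^ 2 := by
  have hg' : ContDiff ℝ 1 (deriv g) := (contDiff_succ_iff_deriv.1 hg).2.2
  obtain ⟨K, hK0, hK⟩ := exists_abs_sub_le_mul_sub hac hg'
  refine ⟨K, hK0, fun s hs => ?_⟩
  have hder (x : ℝ) :
      HasDerivAt (fun x => g x - deriv g c * x) (deriv g x - deriv g c) x :=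
    ((hg.differentiable two_ne_zero x).hasDerivAt.sub
      ((hasDerivAt_id x).const_mul _)).congr_deriv (by ring)
  have hbound : ∀ x ∈ Icc s c, ‖deriv g x - deriv g c‖ ≤ K * (c - s) := fun x hx =>
    (hK x ⟨hs.1.trans hx.1, hx.2⟩).trans (by gcongr; exact hx.1)
  have hmvt := (convex_Icc s c).norm_image_sub_le_of_norm_hasDerivWithin_le
    (fun x _ => (hder x).hasDerivWithinAt) hbound (right_mem_Icc.2 hs.2) (left_mem_Icc.2 hs.2)
  rw [Real.norm_eq_abs, Real.norm_eq_abs, abs_sub_comm s c,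
    abs_of_nonneg (sub_nonneg.2 hs.2)] at hmvt
  calc |g s - g c - deriv g c * (s - c)|
      = |g s - deriv g c * s - (g c - deriv g c * c)| := by ring_nf
    _ ≤ K * (c - s) * (c - s) := hmvt
    _ = K * (c - s) ^ 2 := by ring

lemma exists_mul_sub_le_of_deriv_neg (hac : a ≤ c) (hg : Continuous g)
    (hgd : DifferentiableAt ℝ g c) (hgc : g c = 0) (hpos : ∀ s ∈ Ico a c, 0 < g s)
    (hneg : deriv g c < 0) :
    ∃ κ > 0, ∀ s ∈ Icc a c, κ * (c - s) ≤ g s := by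
  -- The slope of `g` from `c`, extended by `deriv g c` at `c`, is continuous and negative.
  have hcont : Continuous (dslope g c) := by
    rw [← continuousOn_univ, continuousOn_dslope univ_mem]
    exact ⟨hg.continuousOn, hgd⟩
  have hmul (s : ℝ) : -dslope g c s * (c - s) = g s := by
    have := sub_smul_dslope g c s
    rw [smul_eq_mul, hgc, sub_zero] at this
    linarith
  obtain ⟨x, hx, hmax⟩ :=
    isCompact_Icc.exists_isMaxOn (nonempty_Icc.2 hac) hcont.continuousOn
  refine ⟨-dslope g c x, ?_, fun s hs => ?_⟩
  · rcases hx.2.eq_or_lt with rfl | hxc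
    · rw [dslope_same]
      exact neg_pos.2 hneg
    · refine pos_of_mul_pos_left ?_ (sub_nonneg.2 hxc.le)
      exact (hmul x).symm ▸ hpos x ⟨hx.1, hxc⟩
  · rw [← hmul s]
    have hle : dslope g c s ≤ dslope g c x := hmax hs
    have := hs.2
    gcongr

lemma exists_abs_div_pow_le (hac : a ≤ c) (hh : Continuous h) (hg : Continuous g)
    (hgd : DifferentiableAt ℝ g c) (hgc : g c = 0) (hpos : ∀ s ∈ Ico a c, 0 < g s)
    (hneg : deriv g c < 0) (j : ℕ) :
    ∃ C, 0 ≤ C ∧ ∀ s ∈ Ico a c, |h s / g s ^ j| ≤ C / (c - s) ^ j := by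
  obtain ⟨M, hM⟩ := isCompact_Icc.exists_bound_of_continuousOn (s := Icc a c) hh.continuousOn
  obtain ⟨κ, hκ, hκg⟩ := exists_mul_sub_le_of_deriv_neg hac hg hgd hgc hpos hneg
  have hM0 : 0 ≤ M := (norm_nonneg _).trans (hM c (right_mem_Icc.2 hac))
  refine ⟨M / κ ^ j, by positivity, fun s hs => ?_⟩
  have hu : 0 < c - s := sub_pos.2 hs.2
  rw [abs_div, abs_of_pos (pow_pos (hpos s hs) j), div_div, ← mul_pow]
  gcongr
  · exact hM s (Ico_subset_Icc_self hs)
  · exact hκg s (Ico_subset_Icc_self hs)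

lemma abs_div_le_div_of_le_mul {x y z K κ : ℝ} (hy : 0 < y) (hκ : 0 < κ) (hx : |x| ≤ K * y)
    (hz : κ * y ≤ z) : |x / z| ≤ K / κ := by
  have hκy : 0 < κ * y := mul_pos hκ hy
  rw [abs_div, abs_of_pos (hκy.trans_le hz)]
  calc |x| / z ≤ K * y / (κ * y) :=
        div_le_div₀ ((abs_nonneg x).trans hx) hx hκy hz
    _ = K / κ := mul_div_mul_right K κ hy.ne'

lemma exists_abs_div_sub_simplePole_le (hac : a ≤ c) (hh : ContDiff ℝ 1 h) (hg : ContDiff ℝ 2 g)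
    (hgc : g c = 0) (hpos : ∀ s ∈ Ico a c, 0 < g s) (hneg : deriv g c < 0) :
    ∃ C, 0 ≤ C ∧ ∀ s ∈ Ico a c, |h s / g s - h c / |deriv g c| / (c - s)| ≤ C := by
  obtain ⟨K, hK0, hK⟩ := exists_abs_sub_le_mul_sub hac hh
  obtain ⟨M, hM0, hM⟩ := exists_abs_sub_deriv_mul_sub_le hac hg
  obtain ⟨κ, hκ, hκg⟩ := exists_mul_sub_le_of_deriv_neg hac hg.continuous
    (hg.differentiable two_ne_zero c) hgc hpos hneg
  rw [abs_of_neg hneg]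
  set d := -deriv g c with hd
  have hd0 : 0 < d := neg_pos.2 hneg
  refine ⟨K / κ + |h c / d| * (M / κ), by positivity, fun s hs => ?_⟩
  have hs' := Ico_subset_Icc_self hs
  have hu : 0 < c - s := sub_pos.2 hs.2
  have hgs := hpos s hs
  have hnumerator : |(h s - h c) / g s| ≤ K / κ :=
    abs_div_le_div_of_le_mul hu hκ (hK s hs') (hκg s hs')
  have hdenominator : |(g s - d * (c - s)) / (g s * (c - s))| ≤ M / κ := by
    refine abs_div_le_div_of_le_mul (pow_pos hu 2) hκ ?_ ?_
    · convert hM s hs' using 2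
      rw [hgc, hd]
      ring
    · rw [pow_two, ← mul_assoc]
      gcongr
      exact hκg s hs'
  calc |h s / g s - h c / d / (c - s)|
      = |(h s - h c) / g s - h c / d * ((g s - d * (c - s)) / (g s * (c - s)))| := by
        congr 1
        field_simp
        ring
    _ ≤ |(h s - h c) / g s| + |h c / d| * |(g s - d * (c - s)) / (g s * (c - s))| := by
        rw [← abs_mul]
        exact abs_sub _ _
    _ ≤ K / κ + |h c / d| * (M / κ) := by gcongr

lemma exists_div_deriv_bounds (hac : a ≤ c) (hf : ContDiff ℝ 3 f) (hcrit : deriv f c = 0)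
    (hf' : ∀ s ∈ Ico a c, 0 < deriv f s) (hsec : deriv (deriv f) c < 0) :
    ∃ C, 0 < C ∧ ∀ s ∈ Ico a c,
      |f s / deriv f s - f c / |deriv (deriv f) c| / (c - s)| ≤ C ∧
      |f s / deriv f s| ≤ C / (c - s) ∧
      |(deriv f s ^ 2 - f s * deriv (deriv f) s) / deriv f s ^ 2| ≤ C / (c - s) ^ 2 := by
  have hf1 : ContDiff ℝ 2 (deriv f) := (contDiff_succ_iff_deriv.1 hf).2.2
  have hcont := hf.continuous
  have hcont1 := hf1.continuous
  have hcont2 : Continuous (deriv (deriv f)) := hf1.continuous_deriv one_le_two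
  have hdiff := hf1.differentiable two_ne_zero c
  obtain ⟨C₀, hC₀, hpole⟩ := exists_abs_div_sub_simplePole_le hac
    (hf.of_le (by norm_num)) hf1 hcrit hf' hsec
  obtain ⟨C₁, hC₁, hquot⟩ := exists_abs_div_pow_le hac hcont hcont1 hdiff hcrit hf' hsec 1
  obtain ⟨C₂, hC₂, hder⟩ := exists_abs_div_pow_le hac
    ((hcont1.pow 2).sub (hcont.mul hcont2)) hcont1 hdiff hcrit hf' hsec 2
  simp only [pow_one] at hquot
  refine ⟨C₀ + C₁ + C₂ + 1, by positivity, fun s hs => ?_⟩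
  have hu : 0 < c - s := sub_pos.2 hs.2
  refine ⟨(hpole s hs).trans ?_, (hquot s hs).trans ?_, (hder s hs).trans ?_⟩
  · linarith
  · gcongr
    linarith
  · gcongr
    linarith

end CriticalPoint

lemma integral_const_add_div_pow_three_le {A B c δ : ℝ} (hδ : 0 < δ) (hδc : δ ≤ c) (hA : 0 ≤ A)
    (hB : 0 ≤ B) : ∫ u in δ..c, (A + B / u ^ 3) ≤ A * c + B / (2 * δ ^ 2) := by
  have hc : 0 < c := hδ.trans_le hδc
  have hzero : (0 : ℝ) ∉ uIcc δ c := notMem_uIcc_of_lt hδ hc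
  have hcube : ∫ u in δ..c, u ^ (-3 : ℤ) = (1 / δ ^ 2 - 1 / c ^ 2) / 2 := by
    rw [integral_zpow (.inr ⟨by norm_num, hzero⟩)]
    norm_num [zpow_neg]
    ring
  have hint : IntervalIntegrable (fun u : ℝ => B * u ^ (-3 : ℤ)) volume δ c :=
    (intervalIntegrable_zpow (.inr hzero)).const_mul B
  calc ∫ u in δ..c, (A + B / u ^ 3)
      = ∫ u in δ..c, (A + B * u ^ (-3 : ℤ)) := by simp [zpow_neg, div_eq_mul_inv]
    _ = A * (c - δ) + B * ((1 / δ ^ 2 - 1 / c ^ 2) / 2) := by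
      rw [integral_add (by simp) hint, intervalIntegral.integral_const_mul, hcube,
        intervalIntegral.integral_const, smul_eq_mul, mul_comm A]
    _ = A * c + B / (2 * δ ^ 2) - (A * δ + B / (2 * c ^ 2)) := by
      field_simp
      ring
    _ ≤ A * c + B / (2 * δ ^ 2) := sub_le_self _ (by positivity)

lemma abs_integral_sub_mul_log_le {g : ℝ → ℝ} {b c δ A B D : ℝ} (hδ : 0 < δ) (hδc : δ ≤ c)
    (hA : 0 ≤ A) (hB : 0 ≤ B) (hg : IntervalIntegrable g volume 0 c)
    (hfar : ∀ u ∈ Ico δ c, |g u - b / u| ≤ A + B / u ^ 3) (hnear : ∀ u ∈ Ioc 0 δ, |g u| ≤ D) :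
    |(∫ u in (0 : ℝ)..c, g u) - b * log (c / δ)| ≤ A * c + B / (2 * δ ^ 2) + D * δ := by
  have hc : 0 < c := hδ.trans_le hδc
  have hne : ∀ u ∈ uIcc δ c, u ≠ 0 := fun u hu => (hδ.trans_le (uIcc_of_le hδc ▸ hu).1).ne'
  have hδmem : δ ∈ uIcc 0 c := mem_uIcc_of_le hδ.le hδc
  have hg₁ : IntervalIntegrable g volume 0 δ := hg.mono_set (uIcc_subset_uIcc_left hδmem)
  have hg₂ : IntervalIntegrable g volume δ c := hg.mono_set (uIcc_subset_uIcc_right hδmem)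
  have hpole : IntervalIntegrable (fun u => b / u) volume δ c :=
    (continuousOn_const.div continuousOn_id hne).intervalIntegrable
  have herr : IntervalIntegrable (fun u => A + B / u ^ 3) volume δ c :=
    (continuousOn_const.add (continuousOn_const.div (continuousOn_pow 3)
      fun u hu => pow_ne_zero 3 (hne u hu))).intervalIntegrable
  have hlog : ∫ u in δ..c, b / u = b * log (c / δ) := by
    simp only [div_eq_mul_inv b, intervalIntegral.integral_const_mul, integral_inv_of_pos hδ hc]
  have hfar_le : |(∫ u in δ..c, g u) - b * log (c / δ)| ≤ A * c + B / (2 * δ ^ 2) := by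
    rw [← hlog, ← integral_sub hg₂ hpole]
    refine (intervalIntegral.norm_integral_le_of_norm_le (f := fun u => g u - b / u)
      hδc ?_ herr).trans (integral_const_add_div_pow_three_le hδ hδc hA hB)
    filter_upwards [Measure.ae_ne volume c] with u huc hu
    exact hfar u ⟨hu.1.le, hu.2.lt_of_ne huc⟩
  have hnear_le : |∫ u in (0 : ℝ)..δ, g u| ≤ D * δ := by
    have := intervalIntegral.norm_integral_le_of_norm_le_const (f := g) (C := D) (a := 0) (b := δ)
      fun u hu => hnear u (uIoc_of_le hδ.le ▸ hu)
    rwa [sub_zero, abs_of_pos hδ] at this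
  rw [← integral_add_adjacent_intervals hg₁ hg₂, add_comm, add_sub_right_comm]
  exact (abs_add_le _ _).trans (add_le_add hfar_le hnear_le)

lemma integral_eq_two_mul_integral_half {g : ℝ → ℝ} {L : ℝ} (hsym : ∀ s, g (L - s) = g s)
    (hg : IntervalIntegrable g volume 0 (L / 2)) :
    ∫ s in (0 : ℝ)..L, g s = 2 * ∫ s in (0 : ℝ)..(L / 2), g s := by
  have hreflect : ∫ s in (L / 2)..L, g s = ∫ s in (0 : ℝ)..(L / 2), g s := by
    simpa only [hsym, sub_half, sub_zero] using
      (integral_comp_sub_left (a := 0) (b := L / 2) g L).symm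
  have hg' : IntervalIntegrable g volume (L / 2) L := by
    simpa only [hsym, sub_half, sub_zero] using (hg.comp_sub_left L).symm
  rw [← integral_add_adjacent_intervals hg hg', hreflect, two_mul]

lemma mul_le_integral_of_monotoneOn {w : ℝ → ℝ} {x y : ℝ} (hxy : x ≤ y)
    (hw : MonotoneOn w (Icc x y)) : (y - x) * w x ≤ ∫ t in x..y, w t := by
  rw [← smul_eq_mul, ← intervalIntegral.integral_const]
  exact integral_mono_on hxy (by simp) (uIcc_of_le hxy ▸ hw).intervalIntegrable
    fun t ht => hw (left_mem_Icc.2 hxy) ht ht.1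

lemma integral_le_mul_of_monotoneOn {w : ℝ → ℝ} {x y : ℝ} (hxy : x ≤ y)
    (hw : MonotoneOn w (Icc x y)) : ∫ t in x..y, w t ≤ (y - x) * w y := by
  rw [← smul_eq_mul, ← intervalIntegral.integral_const]
  exact integral_mono_on hxy (uIcc_of_le hxy ▸ hw).intervalIntegrable (by simp)
    fun t ht => hw ht (right_mem_Icc.2 hxy) ht.2

/-- The running integral `∫₀ˢ w` of a weight `w`: for `w = f ^ (n - 1)` this is `Iₙ(s)`. -/
def mass (w : ℝ → ℝ) (s : ℝ) : ℝ := ∫ t in (0 : ℝ)..s, w t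

/-- The integrand in the formula for the mean hitting time, for a weight `w`. The total mass `T` is
a separate argument so that half of a symmetric interval can be studied on its own. Where `w`
vanishes, as it may at the endpoints, division by zero makes the value `0`. -/
def meanDensity (w : ℝ → ℝ) (T s : ℝ) : ℝ := mass w s / w s * ((T - mass w s) / T)

/-- The mean hitting time of `L`, started at `0`, of the diffusion with generator `∂² + b ∂` and
drift `b = (ln (mass w ^ 2 / w))'`, given by its explicit integral formula. -/
def meanHittingTime (w : ℝ → ℝ) (L : ℝ) : ℝ := ∫ s in (0 : ℝ)..L, meanDensity w (mass w L) s

section Weight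

variable {w : ℝ → ℝ} {a c s δ L T : ℝ}

lemma nonneg_of_monotoneOn (hmono : MonotoneOn w (Icc 0 c)) (h0 : 0 ≤ w 0) (hs : s ∈ Icc 0 c) :
    0 ≤ w s :=
  h0.trans (hmono ⟨le_rfl, hs.1.trans hs.2⟩ hs hs.1)

lemma mass_sub_mass (hw : Continuous w) (x y : ℝ) : mass w y - mass w x = ∫ t in x..y, w t :=
  integral_interval_sub_left (hw.intervalIntegrable 0 y) (hw.intervalIntegrable 0 x)

lemma continuous_mass (hw : Continuous w) : Continuous (mass w) :=
  continuous_primitive hw.intervalIntegrable 0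

lemma mass_nonneg (hs : 0 ≤ s) (hw : ∀ t ∈ Icc 0 s, 0 ≤ w t) : 0 ≤ mass w s :=
  integral_nonneg hs hw

lemma mass_le_mul (hs : 0 ≤ s) (hmono : MonotoneOn w (Icc 0 s)) : mass w s ≤ s * w s := by
  simpa only [mass, sub_zero] using integral_le_mul_of_monotoneOn hs hmono

lemma mul_le_sub_mass (hw : Continuous w) (hs : s ≤ c) (hmono : MonotoneOn w (Icc s c))
    (hT : mass w c ≤ T) : (c - s) * w s ≤ T - mass w s := by
  have := mul_le_integral_of_monotoneOn hs hmono
  rw [← mass_sub_mass hw] at this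
  linarith

lemma mass_div_le_two_mul (hw : Continuous w) (has : a ≤ s) (hmono : MonotoneOn w (Icc a s))
    (hs : 0 < w s) (hδ : s - a ≤ δ) (ha : mass w a ≤ δ * w a) : mass w s / w s ≤ 2 * δ := by
  have hδ0 : 0 ≤ δ := (sub_nonneg.2 has).trans hδ
  have hwas : w a ≤ w s := hmono (left_mem_Icc.2 has) (right_mem_Icc.2 has) has
  rw [div_le_iff₀ hs]
  calc mass w s = mass w a + ∫ t in a..s, w t := by rw [← mass_sub_mass hw]; ring
    _ ≤ δ * w a + (s - a) * w s := add_le_add ha (integral_le_mul_of_monotoneOn has hmono)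
    _ ≤ δ * w s + δ * w s := by gcongr
    _ = 2 * δ * w s := by ring

lemma abs_meanDensity_le (hs : 0 ≤ w s) (hmass : 0 ≤ mass w s) (hT : mass w s ≤ T) :
    |meanDensity w T s| ≤ mass w s / w s := by
  have hq : 0 ≤ mass w s / w s := by positivity
  have hT0 : 0 ≤ T := hmass.trans hT
  have hr0 : 0 ≤ (T - mass w s) / T := div_nonneg (sub_nonneg.2 hT) hT0
  have hr1 : (T - mass w s) / T ≤ 1 := div_le_one_of_le₀ (by linarith) hT0
  rw [meanDensity, abs_of_nonneg (mul_nonneg hq hr0)]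
  exact mul_le_of_le_one_right hq hr1

lemma abs_meanDensity_le_of_monotoneOn (hw : Continuous w) (hmono : MonotoneOn w (Icc 0 c))
    (h0 : 0 ≤ w 0) (hT : mass w c ≤ T) (hs : s ∈ Icc 0 c) :
    |meanDensity w T s| ≤ mass w s / w s := by
  have hnonneg : ∀ t ∈ Icc 0 c, 0 ≤ w t := fun _ => nonneg_of_monotoneOn hmono h0
  have hle := mul_le_sub_mass hw hs.2 (hmono.mono (Icc_subset_Icc_left hs.1)) hT
  have := mul_nonneg (sub_nonneg.2 hs.2) (hnonneg s hs)
  exact abs_meanDensity_le (hnonneg s hs)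
    (mass_nonneg hs.1 fun t ht => hnonneg t ⟨ht.1, ht.2.trans hs.2⟩) (by linarith)

lemma intervalIntegrable_meanDensity (hc : 0 ≤ c) (hw : Continuous w)
    (hmono : MonotoneOn w (Icc 0 c)) (h0 : 0 ≤ w 0) (hT : mass w c ≤ T) :
    IntervalIntegrable (meanDensity w T) volume 0 c := by
  have hmeas : Measurable (meanDensity w T) :=
    have hmass := (continuous_mass hw).measurable
    (hmass.div hw.measurable).mul ((hmass.const_sub T).div_const T)
  refine (intervalIntegrable_const (c := c)).mono_fun' hmeas.aestronglyMeasurable ?_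
  rw [uIoc_of_le hc]
  refine (ae_restrict_mem measurableSet_Ioc).mono fun s hs => ?_
  have hs' := Ioc_subset_Icc_self hs
  calc ‖meanDensity w T s‖ ≤ mass w s / w s :=
        abs_meanDensity_le_of_monotoneOn hw hmono h0 hT hs'
    _ ≤ s := div_le_of_le_mul₀ (nonneg_of_monotoneOn hmono h0 hs') hs'.1
        (mass_le_mul hs'.1 (hmono.mono (Icc_subset_Icc_right hs'.2)))
    _ ≤ c := hs'.2

lemma mass_sub_left (hw : Continuous w) (hsym : ∀ s, w (L - s) = w s) (s : ℝ) :
    mass w (L - s) = mass w L - mass w s := by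
  rw [mass_sub_mass hw]
  simpa only [mass, hsym, sub_self] using (integral_comp_sub_left (a := s) (b := L) w L).symm

lemma meanDensity_sub_left (hw : Continuous w) (hsym : ∀ s, w (L - s) = w s) (s : ℝ) :
    meanDensity w (mass w L) (L - s) = meanDensity w (mass w L) s := by
  simp only [meanDensity, mass_sub_left hw hsym, hsym, sub_sub_cancel]
  ring

lemma mass_eq_two_mul_mass_half (hw : Continuous w) (hsym : ∀ s, w (L - s) = w s) :
    mass w L = 2 * mass w (L / 2) :=
  integral_eq_two_mul_integral_half hsym (hw.intervalIntegrable _ _)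

lemma meanHittingTime_eq_two_mul_integral_half (hL : 0 ≤ L) (hw : Continuous w)
    (hsym : ∀ s, w (L - s) = w s) (hmono : MonotoneOn w (Icc 0 (L / 2)))
    (h0 : 0 ≤ w 0) :
    meanHittingTime w L = 2 * ∫ s in (0 : ℝ)..(L / 2), meanDensity w (mass w L) s := by
  have hhalf : 0 ≤ mass w (L / 2) := mass_nonneg (by positivity) fun _ =>
    nonneg_of_monotoneOn hmono h0
  refine integral_eq_two_mul_integral_half (meanDensity_sub_left hw hsym)
    (intervalIntegrable_meanDensity (by positivity) hw hmono h0 ?_)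
  rw [mass_eq_two_mul_mass_half hw hsym]
  linarith

lemma abs_mul_integral_meanDensity_sub_le {b m A B : ℝ} (hw : Continuous w)
    (hmono : MonotoneOn w (Icc 0 c)) (h0 : 0 ≤ w 0) (hpos : ∀ s ∈ Ioc 0 c, 0 < w s)
    (hT : mass w c ≤ T) (hm : 0 ≤ m) (hA : 0 ≤ A) (hB : 0 ≤ B) (hδ : δ ∈ Ioo 0 c)
    (hmass : mass w (c - δ) ≤ δ * w (c - δ))
    (hfar : ∀ s ∈ Ioc 0 (c - δ), |m * meanDensity w T s - b / (c - s)| ≤ A + B / (c - s) ^ 3) :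
    |m * (∫ s in (0 : ℝ)..c, meanDensity w T s) - b * log (c / δ)| ≤
      A * c + B / (2 * δ ^ 2) + m * (2 * δ) * δ := by
  have hfar' : ∀ u ∈ Ico δ c, |m * meanDensity w T (c - u) - b / u| ≤ A + B / u ^ 3 := by
    intro u hu
    simpa only [sub_sub_cancel] using hfar (c - u) ⟨sub_pos.2 hu.2, by linarith [hu.1]⟩
  have hnear : ∀ u ∈ Ioc 0 δ, |m * meanDensity w T (c - u)| ≤ m * (2 * δ) := by
    intro u hu
    have hle : c - δ ≤ c - u := by linarith [hu.2]
    have hmem : c - u ∈ Ioc 0 c := ⟨by linarith [hδ.2, hu.2], by linarith [hu.1]⟩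
    rw [abs_mul, abs_of_nonneg hm]
    gcongr
    calc |meanDensity w T (c - u)| ≤ mass w (c - u) / w (c - u) :=
          abs_meanDensity_le_of_monotoneOn hw hmono h0 hT (Ioc_subset_Icc_self hmem)
      _ ≤ 2 * δ := mass_div_le_two_mul hw hle
          (hmono.mono (Icc_subset_Icc (by linarith [hδ.2]) hmem.2)) (hpos _ hmem)
          (by linarith [hu.1]) hmass
  have hint : IntervalIntegrable (fun u => meanDensity w T (c - u)) volume 0 c := by
    simpa only [sub_zero, sub_self] using
      ((intervalIntegrable_meanDensity (hδ.1.trans hδ.2).le hw hmono h0 hT).comp_sub_left c).symm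
  have hlog := abs_integral_sub_mul_log_le hδ.1 hδ.2.le hA hB (hint.const_mul m) hfar' hnear
  rwa [intervalIntegral.integral_const_mul, integral_comp_sub_left, sub_self, sub_zero] at hlog

end Weight

section Power

variable {f : ℝ → ℝ} {c s A : ℝ}

lemma integral_deriv_div_deriv_mul_pow (hf : ContDiff ℝ 2 f) (h0 : f 0 = 0) (hs : 0 ≤ s)
    (hf' : ∀ t ∈ Icc 0 s, deriv f t ≠ 0) (k : ℕ) :
    ∫ t in (0 : ℝ)..s,
        (deriv f t ^ 2 - f t * deriv (deriv f) t) / deriv f t ^ 2 * f t ^ k =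
      f s / deriv f s * f s ^ k - k * mass (f ^ k) s := by
  have hf1 : ContDiff ℝ 1 (deriv f) := (contDiff_succ_iff_deriv.1 hf).2.2
  have hcont := hf.continuous
  have hcont1 := hf1.continuous
  have hcont2 : Continuous (deriv (deriv f)) := hf1.continuous_deriv le_rfl
  have hder : ∀ t ∈ uIcc 0 s, HasDerivAt (fun t => f t / deriv f t * f t ^ k)
      ((deriv f t ^ 2 - f t * deriv (deriv f) t) / deriv f t ^ 2 * f t ^ k + k * f t ^ k) t := by
    intro t ht
    have hne := hf' t (uIcc_of_le hs ▸ ht)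
    have hft := (hf.differentiable two_ne_zero t).hasDerivAt
    refine ((hft.fun_div (hf1.differentiable one_ne_zero t).hasDerivAt hne).fun_mul
      (hft.fun_pow k)).congr_deriv ?_
    rcases k with _ | j
    · simp [pow_two]
    · rw [Nat.add_sub_cancel]
      field_simp
      ring
  have hint : IntervalIntegrable
      (fun t => (deriv f t ^ 2 - f t * deriv (deriv f) t) / deriv f t ^ 2 * f t ^ k)
      volume 0 s := by
    have hnum := ((hcont1.pow 2).sub (hcont.mul hcont2)).continuousOn (s := uIcc 0 s)
    exact ((hnum.div (hcont1.pow 2).continuousOn fun t ht =>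
      pow_ne_zero 2 (hf' t (uIcc_of_le hs ▸ ht))).mul
        (hcont.pow k).continuousOn).intervalIntegrable
  have hint' : IntervalIntegrable (fun t => k * f t ^ k) volume 0 s :=
    Continuous.intervalIntegrable (by fun_prop) 0 s
  have hFTC := integral_eq_sub_of_hasDerivAt hder (hint.add hint')
  rw [integral_add hint hint', intervalIntegral.integral_const_mul, h0, zero_div, zero_mul,
    sub_zero] at hFTC
  exact eq_sub_of_add_eq hFTC

lemma abs_div_deriv_mul_pow_sub_le (hf : ContDiff ℝ 2 f) (h0 : f 0 = 0) (hs : 0 ≤ s)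
    (hnonneg : ∀ t ∈ Icc 0 s, 0 ≤ f t) (hf' : ∀ t ∈ Icc 0 s, deriv f t ≠ 0)
    (hA : ∀ t ∈ Icc 0 s, |(deriv f t ^ 2 - f t * deriv (deriv f) t) / deriv f t ^ 2| ≤ A)
    (k : ℕ) : |f s / deriv f s * f s ^ k - k * mass (f ^ k) s| ≤ A * mass (f ^ k) s := by
  rw [← integral_deriv_div_deriv_mul_pow hf h0 hs hf', mass,
    ← intervalIntegral.integral_const_mul]
  have hint : IntervalIntegrable (fun t => A * f t ^ k) volume 0 s :=
    (continuous_const.mul (hf.continuous.pow k)).intervalIntegrable 0 s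
  refine intervalIntegral.norm_integral_le_of_norm_le (E := ℝ) hs
    (ae_of_all _ fun t ht => ?_) hint
  have ht' := Ioc_subset_Icc_self ht
  rw [norm_mul, Real.norm_eq_abs, Real.norm_of_nonneg (pow_nonneg (hnonneg t ht') k)]
  exact mul_le_mul_of_nonneg_right (hA t ht') (pow_nonneg (hnonneg t ht') k)

lemma le_two_mul_div_of_abs_sub_le {q φ u m C : ℝ} (hu : 0 < u) (hm : 0 < m) (hq : 0 ≤ q)
    (hφ : |φ| ≤ C / u) (hφq : |φ - m * q| ≤ C / u ^ 2 * q) (hC : 2 * C ≤ m * u ^ 2) :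
    q ≤ 2 * C / (m * u) := by
  have hsmall : C / u ^ 2 * q ≤ m / 2 * q := by
    refine mul_le_mul_of_nonneg_right ?_ hq
    rw [div_le_iff₀ (by positivity)]
    linarith
  have hhalf : m * q ≤ 2 * (C / u) := by
    linarith [(abs_le.1 hφq).1, le_of_abs_le hφ]
  calc q = m * q / m := by field_simp
    _ ≤ 2 * (C / u) / m := by gcongr
    _ = 2 * C / (m * u) := by field_simp

lemma abs_mul_mul_one_sub_sub_le {q r φ b u m C : ℝ} (hu : 0 < u) (hm : 0 < m) (hq : 0 ≤ q)
    (hC : 0 ≤ C) (hφb : |φ - b / u| ≤ C) (hφq : |φ - m * q| ≤ C / u ^ 2 * q)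
    (hqC : q ≤ 2 * C / (m * u)) (hr0 : 0 ≤ r) (hr : r ≤ q / u) :
    |m * (q * (1 - r)) - b / u| ≤ C + 6 * C ^ 2 / m / u ^ 3 := by
  have hφq' : |m * q - φ| ≤ 2 * C ^ 2 / m / u ^ 3 := by
    rw [abs_sub_comm]
    calc |φ - m * q| ≤ C / u ^ 2 * (2 * C / (m * u)) := hφq.trans (by gcongr)
      _ = 2 * C ^ 2 / m / u ^ 3 := by field_simp
  have hmqr : |m * q * r| ≤ 4 * C ^ 2 / m / u ^ 3 := by
    rw [abs_of_nonneg (by positivity)]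
    calc m * q * r ≤ m * (2 * C / (m * u)) * (2 * C / (m * u) / u) := by
          gcongr
          exact hr.trans (by gcongr)
      _ = 4 * C ^ 2 / m / u ^ 3 := by field_simp; ring
  calc |m * (q * (1 - r)) - b / u| = |(φ - b / u) + (m * q - φ) - m * q * r| := by ring_nf
    _ ≤ |φ - b / u| + |m * q - φ| + |m * q * r| :=
      (abs_sub _ _).trans (by gcongr; exact abs_add_le _ _)
    _ ≤ C + 2 * C ^ 2 / m / u ^ 3 + 4 * C ^ 2 / m / u ^ 3 := by gcongr
    _ = C + 6 * C ^ 2 / m / u ^ 3 := by ring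

lemma meanDensity_bounds_of_abs_sub_le {w : ℝ → ℝ} {T φ b m C : ℝ} (hsc : s < c) (hm : 0 < m)
    (hC : 0 ≤ C) (hw : 0 < w s) (hmass : 0 ≤ mass w s) (hT : (c - s) * w s ≤ T - mass w s)
    (hφb : |φ - b / (c - s)| ≤ C) (hφ : |φ| ≤ C / (c - s))
    (hφw : |φ * w s - m * mass w s| ≤ C / (c - s) ^ 2 * mass w s)
    (hCm : 2 * C ≤ m * (c - s) ^ 2) :
    mass w s / w s ≤ 2 * C / (m * (c - s)) ∧
      |m * meanDensity w T s - b / (c - s)| ≤ C + 6 * C ^ 2 / m / (c - s) ^ 3 := by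
  have hu : 0 < c - s := sub_pos.2 hsc
  have huw : 0 < (c - s) * w s := mul_pos hu hw
  have hT0 : 0 < T := by linarith
  have hq : 0 ≤ mass w s / w s := by positivity
  have hφq : |φ - m * (mass w s / w s)| ≤ C / (c - s) ^ 2 * (mass w s / w s) := by
    have heq : φ - m * (mass w s / w s) = (φ * w s - m * mass w s) / w s := by field_simp
    rw [heq, abs_div, abs_of_pos hw, div_le_iff₀ hw]
    refine hφw.trans_eq ?_
    field_simp
  have hqC := le_two_mul_div_of_abs_sub_le hu hm hq hφ hφq hCm
  have hr : mass w s / T ≤ mass w s / w s / (c - s) := by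
    rw [div_div, mul_comm (w s)]
    gcongr
    linarith
  refine ⟨hqC, ?_⟩
  rw [meanDensity, sub_div, div_self hT0.ne']
  exact abs_mul_mul_one_sub_sub_le hu hm hq hC hφb hφq hqC (by positivity) hr

lemma strictMonoOn_Icc_of_deriv_pos (hf : Continuous f) (hf' : ∀ s ∈ Ico 0 c, 0 < deriv f s) :
    StrictMonoOn f (Icc 0 c) :=
  strictMonoOn_of_deriv_pos (convex_Icc 0 c) hf.continuousOn fun x hx =>
    hf' x (Ioo_subset_Ico_self (interior_Icc (a := (0 : ℝ)) ▸ hx))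

lemma monotoneOn_pow (hmono : MonotoneOn f (Icc 0 c)) (h0 : 0 ≤ f 0) (k : ℕ) :
    MonotoneOn (f ^ k) (Icc 0 c) := fun _ hx _ hy hxy =>
  pow_le_pow_left₀ (nonneg_of_monotoneOn hmono h0 hx) (hmono hx hy hxy) k

lemma exists_meanDensity_pow_bounds (hf : ContDiff ℝ 3 f) (h0 : f 0 = 0) (hc : 0 ≤ c)
    (hcrit : deriv f c = 0) (hf' : ∀ s ∈ Ico 0 c, 0 < deriv f s)
    (hsec : deriv (deriv f) c < 0) :
    ∃ C, 0 < C ∧ ∀ k : ℕ, 1 ≤ k → ∀ T, mass (f ^ k) c ≤ T →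
      ∀ s ∈ Ioo 0 c, 2 * C ≤ k * (c - s) ^ 2 →
        mass (f ^ k) s / (f ^ k) s ≤ 2 * C / (k * (c - s)) ∧
        |k * meanDensity (f ^ k) T s - f c / |deriv (deriv f) c| / (c - s)| ≤
          C + 6 * C ^ 2 / k / (c - s) ^ 3 := by
  obtain ⟨C, hC, hbounds⟩ := exists_div_deriv_bounds hc hf hcrit hf' hsec
  refine ⟨C, hC, fun k hk T hT s hs hku => ?_⟩
  have hstrict := strictMonoOn_Icc_of_deriv_pos hf.continuous hf'
  have hmono := hstrict.monotoneOn
  have hnonneg : ∀ t ∈ Icc 0 s, 0 ≤ f t := fun t ht =>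
    nonneg_of_monotoneOn hmono h0.ge ⟨ht.1, ht.2.trans hs.2.le⟩
  have hfs : 0 < f s := h0 ▸ hstrict (left_mem_Icc.2 hc) (Ioo_subset_Icc_self hs) hs.1
  have hu : 0 < c - s := sub_pos.2 hs.2
  have hmem : ∀ t ∈ Icc 0 s, t ∈ Ico 0 c := fun t ht => ⟨ht.1, ht.2.trans_lt hs.2⟩
  obtain ⟨hpole, hquot, -⟩ := hbounds s ⟨hs.1.le, hs.2⟩
  have hderiv_le : ∀ t ∈ Icc 0 s,
      |(deriv f t ^ 2 - f t * deriv (deriv f) t) / deriv f t ^ 2| ≤ C / (c - s) ^ 2 := by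
    intro t ht
    refine (hbounds t (hmem t ht)).2.2.trans ?_
    gcongr
    exact ht.2
  exact meanDensity_bounds_of_abs_sub_le hs.2 (Nat.cast_pos.2 hk) hC.le (pow_pos hfs k)
    (mass_nonneg hs.1.le fun t ht => pow_nonneg (hnonneg t ht) k)
    (mul_le_sub_mass (hf.continuous.pow k) hs.2.le
      ((monotoneOn_pow hmono h0.ge k).mono (Icc_subset_Icc_left hs.1.le)) hT)
    hpole hquot
    (abs_div_deriv_mul_pow_sub_le (hf.of_le (by norm_num)) h0 hs.1.le hnonneg
      (fun t ht => (hf' t (hmem t ht)).ne') hderiv_le k) hku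

lemma exists_abs_mul_integral_meanDensity_pow_sub_le (hf : ContDiff ℝ 3 f) (h0 : f 0 = 0)
    (hc : 0 ≤ c) (hcrit : deriv f c = 0) (hf' : ∀ s ∈ Ico 0 c, 0 < deriv f s)
    (hsec : deriv (deriv f) c < 0) :
    ∃ C, 0 < C ∧ ∀ k : ℕ, 1 ≤ k → ∀ T, mass (f ^ k) c ≤ T →
      ∀ δ ∈ Ioo 0 c, k * δ ^ 2 = 2 * C →
        |k * (∫ s in (0 : ℝ)..c, meanDensity (f ^ k) T s) -
          f c / |deriv (deriv f) c| * log (c / δ)| ≤ C * c + 11 / 2 * C := by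
  obtain ⟨C, hC, hbounds⟩ := exists_meanDensity_pow_bounds hf h0 hc hcrit hf' hsec
  refine ⟨C, hC, fun k hk T hT δ hδ hkδ => ?_⟩
  have hk0 : (0 : ℝ) < k := Nat.cast_pos.2 hk
  have hδ0 : 0 < δ := hδ.1
  have hstrict := strictMonoOn_Icc_of_deriv_pos hf.continuous hf'
  have hpos : ∀ s ∈ Ioc 0 c, 0 < (f ^ k) s := fun s hs =>
    pow_pos (h0 ▸ hstrict (left_mem_Icc.2 hc) (Ioc_subset_Icc_self hs) hs.1) k
  have hmem : c - δ ∈ Ioo 0 c := ⟨sub_pos.2 hδ.2, sub_lt_self c hδ0⟩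
  have hmass : mass (f ^ k) (c - δ) ≤ δ * (f ^ k) (c - δ) := by
    rw [← div_le_iff₀ (hpos _ (Ioo_subset_Ioc_self hmem))]
    refine (hbounds k hk T hT (c - δ) hmem ?_).1.trans_eq ?_
    · rw [sub_sub_cancel, hkδ]
    · rw [sub_sub_cancel, ← hkδ]
      field_simp
  have hfar : ∀ s ∈ Ioc 0 (c - δ),
      |k * meanDensity (f ^ k) T s - f c / |deriv (deriv f) c| / (c - s)| ≤
        C + 6 * C ^ 2 / k / (c - s) ^ 3 := by
    intro s hs
    refine (hbounds k hk T hT s ⟨hs.1, hs.2.trans_lt hmem.2⟩ ?_).2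
    rw [← hkδ]
    gcongr
    linarith [hs.2]
  refine (abs_mul_integral_meanDensity_sub_le (hf.continuous.pow k)
    (monotoneOn_pow hstrict.monotoneOn h0.ge k) (pow_nonneg h0.ge k) hpos hT hk0.le hC.le
    (by positivity) hδ hmass hfar).trans_eq ?_
  have hC_eq : C = k * δ ^ 2 / 2 := by linarith
  rw [hC_eq]
  field_simp
  ring

lemma isBigO_mul_integral_meanDensity_pow_sub_log (hf : ContDiff ℝ 3 f) (h0 : f 0 = 0)
    (hc : 0 < c) (hcrit : deriv f c = 0) (hf' : ∀ s ∈ Ico 0 c, 0 < deriv f s)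
    (hsec : deriv (deriv f) c < 0) {T : ℕ → ℝ} (hT : ∀ k, mass (f ^ k) c ≤ T k) :
    (fun k : ℕ => k * (∫ s in (0 : ℝ)..c, meanDensity (f ^ k) (T k) s) -
      f c / |deriv (deriv f) c| * (log k / 2)) =O[atTop] (fun _ => (1 : ℝ)) := by
  obtain ⟨C, hC, hbound⟩ :=
    exists_abs_mul_integral_meanDensity_pow_sub_le hf h0 hc.le hcrit hf' hsec
  set b := f c / |deriv (deriv f) c|
  have hsmall : ∀ᶠ k : ℕ in atTop, √(2 * C / k) < c := by
    have := (tendsto_const_div_atTop_nhds_zero_nat (2 * C)).sqrt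
    rw [sqrt_zero] at this
    exact this.eventually_lt_const hc
  refine IsBigO.of_bound (C * c + 11 / 2 * C + |b * (log c - log (2 * C) / 2)|) ?_
  filter_upwards [hsmall, eventually_ge_atTop 1] with k hδ hk
  have hk0 : (0 : ℝ) < k := Nat.cast_pos.2 hk
  have hmain := hbound k hk (T k) (hT k) √(2 * C / k) ⟨by positivity, hδ⟩
    (by rw [sq_sqrt (by positivity)]; field_simp)
  have hlog : log (c / √(2 * C / k)) = log k / 2 + (log c - log (2 * C) / 2) := by
    rw [log_div hc.ne' (by positivity), log_sqrt (by positivity),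
      log_div (by positivity) hk0.ne']
    ring
  rw [hlog, mul_add, ← sub_sub] at hmain
  rw [norm_one, mul_one, Real.norm_eq_abs]
  linarith [abs_sub_abs_le_abs_sub (k * (∫ s in (0 : ℝ)..c, meanDensity (f ^ k) (T k) s) -
    b * (log k / 2)) (b * (log c - log (2 * C) / 2))]

end Power

lemma abs_log_div_sub_log_div_add_one_le {x : ℝ} (hx : 1 ≤ x) :
    |log x / x - log (x + 1) / (x + 1)| ≤ 1 / (x + 1) := by
  have hx0 : 0 < x := by linarith
  have hlog : log x / x ∈ Icc 0 1 :=
    ⟨div_nonneg (log_nonneg hx) hx0.le, (div_le_one hx0).2 (log_le_self hx0.le)⟩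
  have hincr : log (x + 1) - log x ∈ Icc 0 1 := by
    refine ⟨sub_nonneg.2 (log_le_log hx0 (by linarith)), ?_⟩
    rw [← log_div (by positivity) hx0.ne', add_div, div_self hx0.ne']
    have hinv : 1 / x ≤ 1 := (div_le_one hx0).2 hx
    linarith [log_le_sub_one_of_pos (by positivity : 0 < 1 + 1 / x)]
  have heq : log x / x - log (x + 1) / (x + 1) =
      (log x / x - (log (x + 1) - log x)) / (x + 1) := by
    field_simp
    ring
  rw [heq, abs_div, abs_of_pos (by positivity : 0 < x + 1)]
  gcongr
  exact abs_sub_le_of_nonneg_of_le hlog.1 hlog.2 hincr.1 hincr.2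

lemma isBigO_log_div_sub_one_sub_log_div :
    (fun n : ℕ => log (n - 1 : ℕ) / (n - 1 : ℕ) - log n / n) =O[atTop] fun n : ℕ => (n : ℝ)⁻¹ := by
  refine IsBigO.of_bound 1 ?_
  filter_upwards [eventually_ge_atTop 2] with n hn
  obtain ⟨k, rfl⟩ := Nat.exists_eq_add_of_le' (one_le_two.trans hn)
  have hk : (1 : ℝ) ≤ k := by exact_mod_cast Nat.le_of_succ_le_succ hn
  have := abs_log_div_sub_log_div_add_one_le hk
  rwa [one_mul, norm_inv, RCLike.norm_natCast, Real.norm_eq_abs, Nat.add_sub_cancel,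
    Nat.cast_add_one, ← one_div]

lemma isBigO_inv_natCast_sub_one :
    (fun n : ℕ => ((n - 1 : ℕ) : ℝ)⁻¹) =O[atTop] fun n : ℕ => (n : ℝ)⁻¹ := by
  refine IsBigO.of_bound 2 ?_
  filter_upwards [eventually_ge_atTop 2] with n hn
  obtain ⟨k, rfl⟩ := Nat.exists_eq_add_of_le' (one_le_two.trans hn)
  have hk : (1 : ℝ) ≤ k := by exact_mod_cast Nat.le_of_succ_le_succ hn
  rw [norm_inv, norm_inv, RCLike.norm_natCast, RCLike.norm_natCast, Nat.add_sub_cancel,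
    Nat.cast_add_one, ← div_eq_mul_inv, inv_eq_one_div, div_le_div_iff₀ (by positivity)
    (by positivity)]
  linarith

lemma isBigO_inv_natCast_sqrt_log_div :
    (fun n : ℕ => (n : ℝ)⁻¹) =O[atTop] fun n : ℕ => √(log n) / n := by
  have hsqrt : Tendsto (fun n : ℕ => √(log n)) atTop atTop :=
    tendsto_sqrt_atTop.comp (tendsto_log_atTop.comp tendsto_natCast_atTop_atTop)
  have hone : (fun _ : ℕ => (1 : ℝ)) =O[atTop] fun n : ℕ => √(log n) :=
    (isLittleO_const_left.2 (.inr (tendsto_norm_atTop_atTop.comp hsqrt))).isBigO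
  simpa only [one_mul, div_eq_mul_inv] using
    hone.mul (isBigO_refl (fun n : ℕ => (n : ℝ)⁻¹) atTop)

lemma eq_zero_of_isEquivalent_id {f : ℝ → ℝ} (hf : Continuous f) (h : f ~[𝓝[>] 0] id) :
    f 0 = 0 :=
  tendsto_nhds_unique (hf.continuousAt.mono_left nhdsWithin_le_nhds)
    (h.symm.tendsto_nhds (tendsto_id.mono_left nhdsWithin_le_nhds))

lemma deriv_half_eq_zero {f : ℝ → ℝ} {L : ℝ} (hsym : ∀ s, f (L - s) = f s) :
    deriv f (L / 2) = 0 := by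
  have hneg := deriv_comp_const_sub (f := f) L (L / 2)
  simp only [hsym, sub_half] at hneg
  linarith

lemma isBigO_meanHittingTime_pow_sub_log_div {f : ℝ → ℝ} {L : ℝ} (hL : 0 < L)
    (hf : ContDiff ℝ 3 f) (h0 : f 0 = 0) (hsym : ∀ s, f (L - s) = f s)
    (hf' : ∀ s ∈ Ico 0 (L / 2), 0 < deriv f s) (hsec : deriv (deriv f) (L / 2) < 0) :
    (fun k : ℕ => meanHittingTime (f ^ k) L -
      f (L / 2) / |deriv (deriv f) (L / 2)| * (log k / k)) =O[atTop] fun k : ℕ => (k : ℝ)⁻¹ := by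
  have hsym_pow (k : ℕ) (s : ℝ) : (f ^ k) (L - s) = (f ^ k) s := by
    simp only [Pi.pow_apply, hsym]
  have hmono (k : ℕ) : MonotoneOn (f ^ k) (Icc 0 (L / 2)) :=
    monotoneOn_pow (strictMonoOn_Icc_of_deriv_pos hf.continuous hf').monotoneOn h0.ge k
  have hmean (k : ℕ) := meanHittingTime_eq_two_mul_integral_half hL.le (hf.continuous.pow k)
    (hsym_pow k) (hmono k) (pow_nonneg h0.ge k)
  have hmass (k : ℕ) : mass (f ^ k) (L / 2) ≤ mass (f ^ k) L := by
    have : 0 ≤ mass (f ^ k) (L / 2) := mass_nonneg (half_pos hL).le fun _ =>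
      nonneg_of_monotoneOn (hmono k) (pow_nonneg h0.ge k)
    rw [mass_eq_two_mul_mass_half (hf.continuous.pow k) (hsym_pow k)]
    linarith
  have hhalf := isBigO_mul_integral_meanDensity_pow_sub_log hf h0 (half_pos hL)
    (deriv_half_eq_zero hsym) hf' hsec hmass
  refine ((hhalf.const_mul_left 2).mul (isBigO_refl (fun k : ℕ => (k : ℝ)⁻¹) atTop)).congr' ?_
    (.of_forall fun k => one_mul _)
  filter_upwards [eventually_ge_atTop 1] with k hk
  have hk0 : (k : ℝ) ≠ 0 := Nat.cast_ne_zero.2 (Nat.one_le_iff_ne_zero.1 hk)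
  rw [hmean]
  field_simp

theorem mean_asymptotic_general {f : ℝ → ℝ} {L : ℝ} (hL : 0 < L) (hf : ContDiff ℝ 3 f)
    (h0 : f 0 = 0) (hsym : ∀ s, f (L - s) = f s)
    (hf' : ∀ s ∈ Ico 0 (L / 2), 0 < deriv f s) (hsec : deriv (deriv f) (L / 2) < 0) :
    (fun n : ℕ => meanHittingTime (f ^ (n - 1)) L -
      f (L / 2) / |deriv (deriv f) (L / 2)| * (log n / n)) =O[atTop] fun n : ℕ => (n : ℝ)⁻¹ := by
  have hpow := ((isBigO_meanHittingTime_pow_sub_log_div hL hf h0 hsym hf' hsec).comp_tendsto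
    (tendsto_sub_atTop_nat 1)).trans isBigO_inv_natCast_sub_one
  refine (hpow.add (isBigO_log_div_sub_one_sub_log_div.const_mul_left
    (f (L / 2) / |deriv (deriv f) (L / 2)|))).congr_left fun n => ?_
  simp only [Function.comp_apply]
  ring

/-- `E[τₙ] = (f(L/2)/|f''(L/2)|) (ln n)/n + O(√(ln n)/n)`, where `τₙ` is the hitting
time of `L` by the dual diffusion started at `0`, whose mean is given by the explicit
integral formula. -/
theorem mean_asymptotic
    (L : ℝ) (hL : 0 < L) (f : ℝ → ℝ)
    (hf : ContDiff ℝ 3 f)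
    (hpos : ∀ s ∈ Set.Ioo 0 L, 0 < f s)
    (hasymp : Asymptotics.IsEquivalent (𝓝[>] (0:ℝ)) f id)
    (hsym : ∀ s, f (L - s) = f s)
    (hf' : ∀ s ∈ Set.Ico 0 (L / 2), 0 < deriv f s)
    (hf'' : ∀ s ∈ Set.Icc 0 L, s ≠ L / 2 → deriv (deriv f) s ≤ 0)
    (hsec : deriv (deriv f) (L / 2) < 0)
    (I : ℕ → ℝ → ℝ)
    (hI : ∀ n r, I n r = ∫ s in (0:ℝ)..r, f s ^ (n - 1))
    {Ω : ℕ → Type*} [∀ n, MeasureSpace (Ω n)]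
    [∀ n, IsProbabilityMeasure (volume : Measure (Ω n))]
    (τ : ∀ n, Ω n → ℝ)
    (hE : ∀ n, 2 ≤ n →
      (∫ ω, τ n ω) = ∫ s in (0:ℝ)..L, I n s / f s ^ (n - 1) * ((I n L - I n s) / I n L)) :
    (fun n : ℕ => (∫ ω, τ n ω)
        - f (L / 2) / |deriv (deriv f) (L / 2)| * (Real.log n / n))
      =O[atTop] (fun n : ℕ => Real.sqrt (Real.log n) / n) := by
  refine ((mean_asymptotic_general hL hf (eq_zero_of_isEquivalent_id hf.continuous hasymp)
    hsym hf' hsec).congr' ?_ .rfl).trans isBigO_inv_natCast_sqrt_log_div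
  filter_upwards [eventually_ge_atTop 2] with n hn
  simp only [hE n hn, hI, meanHittingTime, meanDensity, mass, Pi.pow_apply]
end
end
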